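/- Let (𝔩,𝔪) be a permissible pair with the algorithm notations in place. Let i ∈ I∪J and i' ∈ I be indices such that b(Δ_i) = b(Δ_{i'}) and e(Δ_i) < e(Δ_{i'}) ≤ e(Δ_{i_#}). Then 𝔡(i') = 𝔡(i) and Δ_{i_#} = Δ_{i'}. -/

import Mathlib

/-!
Call `i` a *predecessor* of `i'` when `Δ_i ≪ Δ_{i'}`. Two facts about the depth carry the proof:
it drops strictly along `≪` (`depth_lt_of_ll`), and either `𝔡(i) = 𝔡'(i)` or some predecessor of
`i` has depth at most `𝔡(i) + 1` (`depth_step`).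

If `x = j_t`, then `x_#` is `x` itself or an `i ∈ I` with `t = 𝔡(i) ≤ 𝔡'(i)`, so
`e(Δ_{x_#}) ≤ e(Δ_x)` and the hypotheses are contradictory.

If `x ∈ I` and `t = 𝔡(x)`, then `𝔡(i') ≤ t` by monotonicity of the depth. For the converse consider
all `z ∈ I` with `b(Δ_z) ≤ b(Δ_x)` and `e(Δ_x) ≤ e(Δ_z) ≤ e(Δ_{x_#})`. Such a `z` has `𝔡'(z) ≥ t`,
so if `𝔡(z) < t` it has a predecessor `z₁` with `𝔡(z₁) ≤ t`. As `z₁` cannot be a predecessor of `x`,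
it lies in the same region, and it cannot have depth `t` since it would lie strictly between `x` and
`x_#` in the cycle of `σ`. Thus `𝔡(z₁) < t` and the descent continues forever, a contradiction
(`le_depth_of_between`). Hence `𝔡(i') = t`; as `i' < x`, the element `x_#` is the next one below `x`
in the fiber, and comparing it with `i'` in the order on `I` gives `Δ_{x_#} = Δ_{i'}`.
-/

/-- A *segment* `Δ(a,b)`: a pair of integers `a ≤ b`.  `b` is the begin point
and `e` the end point. -/
structure Segment where
  b : ℤ
  e : ℤ
  le : b ≤ e

namespace Segment

/-- `Δ₁ ≪ Δ₂` : `b(Δ₁) < b(Δ₂)` and `e(Δ₁) < e(Δ₂)`. -/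
def ll (Δ₁ Δ₂ : Segment) : Prop := Δ₁.b < Δ₂.b ∧ Δ₁.e < Δ₂.e

/-- `Δ₁ ≺ Δ₂` : `b(Δ₁) < b(Δ₂)`, `e(Δ₁) < e(Δ₂)` and `e(Δ₁) ≥ b(Δ₂) - 1`. -/
def prec (Δ₁ Δ₂ : Segment) : Prop := Δ₁.b < Δ₂.b ∧ Δ₁.e < Δ₂.e ∧ Δ₂.b - 1 ≤ Δ₁.e

/-- `⁻Δ = Δ(a-1, b-1)`. -/
def shiftDown (Δ : Segment) : Segment := ⟨Δ.b - 1, Δ.e - 1, by have := Δ.le; omega⟩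

end Segment

/-- The standing data of the inverse Knuth–Viennot algorithm: a nonzero multisegment
`𝔪 = Σ_{i ∈ I} Δ_i` indexed by `I = Fin n` (linearly ordered compatibly with begin
points, ties broken by reversed end points), and a ladder multisegment
`𝔩 = Σ_{t ∈ J} Δ_{j_t}` indexed by `J = Fin l` (`jseg t` is the segment `Δ_{j_{t+1}}`,
enumerated so that `Δ_{j_l} ≪ ⋯ ≪ Δ_{j_1}`), such that the pair `(𝔩, 𝔪)` is
permissible. -/
structure KVData where
  n : ℕ
  l : ℕ
  npos : 0 < n
  lpos : 0 < l
  iseg : Fin n → Segment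
  jseg : Fin l → Segment
  iOrder : ∀ i₁ i₂ : Fin n, i₂ < i₁ →
    (iseg i₂).b < (iseg i₁).b ∨ ((iseg i₂).b = (iseg i₁).b ∧ (iseg i₁).e ≤ (iseg i₂).e)
  ladder : ∀ t t' : Fin l, t < t' → Segment.ll (jseg t') (jseg t)
  permissible : ∀ (m : ℕ) (c : Fin m → Fin n),
    (∀ r s : Fin m, r < s → Segment.ll (iseg (c s)) (iseg (c r))) →
    ∃ φ : Fin m → Fin l, StrictMono φ ∧
      ∀ t : Fin m, Segment.prec (Segment.shiftDown (iseg (c t))) (jseg (φ t))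

namespace KVData

variable (D : KVData)

/-- The segment attached to an index in `I ⊔ J`. -/
def segOf : Fin D.n ⊕ Fin D.l → Segment := Sum.elim D.iseg D.jseg

/-- The set `{t : ⁻Δ_i ≪ Δ_{j_t}}` (0-based positions in the ladder `𝔩`). -/
def dPrimeSet (i : Fin D.n) : Set ℕ :=
  {t : ℕ | ∃ h : t < D.l, Segment.ll (Segment.shiftDown (D.iseg i)) (D.jseg ⟨t, h⟩)}

/-- The set `{𝔡'(i_k) - k : i = i_0, Δ_{i_{r+1}} ≪ Δ_{i_r}}` whose minimum is `𝔡(i)`. -/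
def depthSet (d' : Fin D.n → ℕ) (i : Fin D.n) : Set ℤ :=
  {z : ℤ | ∃ (k : ℕ) (c : ℕ → Fin D.n), c 0 = i ∧
    (∀ r < k, Segment.ll (D.iseg (c (r + 1))) (D.iseg (c r))) ∧
    z = (d' (c k) : ℤ) - (k : ℤ)}

/-- `d'` is the function `𝔡'` and `d` the depth function `𝔡` on `I ⊔ J`
(`𝔡'(i) = max{t : ⁻Δ_i ≪ Δ_{j_t}}`, `𝔡(i) = min{𝔡'(i_k) - k}`, `𝔡(j_t) = t`). -/
def DepthSpec (d' : Fin D.n → ℕ) (d : Fin D.n ⊕ Fin D.l → ℤ) : Prop :=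
  (∀ i, IsGreatest (D.dPrimeSet i) (d' i)) ∧
  (∀ i, IsLeast (D.depthSet d' i) (d (Sum.inl i))) ∧
  (∀ t : Fin D.l, d (Sum.inr t) = (t : ℤ))

/-- `σ` is the permutation of `I ⊔ J` whose disjoint cycles are `(i_1, …, i_s, j_t)`
where `{i_1 > … > i_s} ∪ {j_t} = 𝔡⁻¹(t)`:  an element `i ∈ I` is sent to the largest
element of `I` below it in its fiber of `𝔡`, or to the `J`-element of the fiber if
there is none; the `J`-element of a fiber is sent to the largest `I`-element of the
fiber, or to itself if there is none. -/
def SigmaSpec (d : Fin D.n ⊕ Fin D.l → ℤ) (σ : Equiv.Perm (Fin D.n ⊕ Fin D.l)) : Prop :=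
  (∀ i : Fin D.n,
    (∃ i' : Fin D.n,
        IsGreatest {i'' : Fin D.n | i'' < i ∧ d (Sum.inl i'') = d (Sum.inl i)} i' ∧
        σ (Sum.inl i) = Sum.inl i')
    ∨ ((¬ ∃ i'' : Fin D.n, i'' < i ∧ d (Sum.inl i'') = d (Sum.inl i)) ∧
        ∃ t : Fin D.l, (t : ℤ) = d (Sum.inl i) ∧ σ (Sum.inl i) = Sum.inr t)) ∧
  (∀ t : Fin D.l,
    (∃ i : Fin D.n,
        IsGreatest {i' : Fin D.n | d (Sum.inl i') = (t : ℤ)} i ∧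
        σ (Sum.inr t) = Sum.inl i)
    ∨ ((¬ ∃ i : Fin D.n, d (Sum.inl i) = (t : ℤ)) ∧ σ (Sum.inr t) = Sum.inr t))

/-- `e(Δ♣_x) ≠ e(Δ_x)`, i.e. the end point changes at `x`
(recall `Δ♣_x = Δ(b(Δ_x), e(Δ_{σ(x)}))`). -/
def breaksEnd (σ : Equiv.Perm (Fin D.n ⊕ Fin D.l)) (x : Fin D.n ⊕ Fin D.l) : Prop :=
  (D.segOf (σ x)).e ≠ (D.segOf x).e

/-- `vee` is the map `x ↦ x^∨`:  `x^∨ = σ^{-r}(x)` for the least `r ≥ 1` such that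
`e(Δ♣_{σ^{-r}(x)}) ≠ e(Δ_{σ^{-r}(x)})`, and `x^∨ = j_{𝔡(x)}` if no such `r` exists. -/
def VeeSpec (d : Fin D.n ⊕ Fin D.l → ℤ) (σ : Equiv.Perm (Fin D.n ⊕ Fin D.l))
    (vee : Fin D.n ⊕ Fin D.l → Fin D.n ⊕ Fin D.l) : Prop :=
  ∀ x : Fin D.n ⊕ Fin D.l,
    ((∃ r : ℕ, 1 ≤ r ∧ D.breaksEnd σ ((⇑σ.symm)^[r] x)) →
      ∃ r : ℕ, 1 ≤ r ∧ vee x = (⇑σ.symm)^[r] x ∧ D.breaksEnd σ ((⇑σ.symm)^[r] x) ∧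
        ∀ r' : ℕ, 1 ≤ r' → r' < r → ¬ D.breaksEnd σ ((⇑σ.symm)^[r'] x)) ∧
    ((¬ ∃ r : ℕ, 1 ≤ r ∧ D.breaksEnd σ ((⇑σ.symm)^[r] x)) →
      ∃ t : Fin D.l, (t : ℤ) = d x ∧ vee x = Sum.inr t)

/-- The multisegment `𝔪` of the data. -/
def mSeg : Multiset Segment := Multiset.map D.iseg Finset.univ.val

/-- The ladder multisegment `𝔩` of the data. -/
def lSeg : Multiset Segment := Multiset.map D.jseg Finset.univ.val

end KVData

namespace KVData

variable {D : KVData} {d' : Fin D.n → ℕ} {d : Fin D.n ⊕ Fin D.l → ℤ}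

theorem lt_of_b_lt {i k : Fin D.n} (h : (D.iseg i).b < (D.iseg k).b) : i < k := by
  by_contra hk
  rcases (not_lt.mp hk).eq_or_lt with rfl | hk
  · exact lt_irrefl _ h
  · rcases D.iOrder i k hk with h' | h' <;> omega

theorem lt_of_b_eq_of_e_lt {i k : Fin D.n} (hb : (D.iseg i).b = (D.iseg k).b)
    (he : (D.iseg k).e < (D.iseg i).e) : i < k := by
  by_contra hk
  rcases (not_lt.mp hk).eq_or_lt with rfl | hk
  · exact lt_irrefl _ he
  · rcases D.iOrder i k hk with h' | h' <;> omega

theorem jseg_anti {s t : Fin D.l} (h : s ≤ t) :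
    (D.jseg t).b ≤ (D.jseg s).b ∧ (D.jseg t).e ≤ (D.jseg s).e := by
  rcases h.eq_or_lt with rfl | h
  · exact ⟨le_rfl, le_rfl⟩
  · exact ⟨(D.ladder s t h).1.le, (D.ladder s t h).2.le⟩

theorem dPrime_spec (hdep : D.DepthSpec d' d) (i : Fin D.n) :
    ∃ s : Fin D.l, (s : ℕ) = d' i ∧
      (D.iseg i).b ≤ (D.jseg s).b ∧ (D.iseg i).e ≤ (D.jseg s).e := by
  obtain ⟨h, h1, h2⟩ := (hdep.1 i).1
  refine ⟨⟨_, h⟩, rfl, ?_, ?_⟩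
  · simp only [Segment.shiftDown] at h1; omega
  · simp only [Segment.shiftDown] at h2; omega

theorem le_dPrime (hdep : D.DepthSpec d' d) {i : Fin D.n} {s : Fin D.l}
    (hb : (D.iseg i).b ≤ (D.jseg s).b) (he : (D.iseg i).e ≤ (D.jseg s).e) : (s : ℕ) ≤ d' i := by
  refine (hdep.1 i).2 ⟨s.2, ?_, ?_⟩ <;> simp only [Segment.shiftDown, Fin.eta] <;> omega

theorem depth_le_dPrime (hdep : D.DepthSpec d' d) (i : Fin D.n) : d (Sum.inl i) ≤ d' i :=
  (hdep.2.1 i).2 ⟨0, fun _ => i, rfl, by simp, by simp⟩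

/-- Prepending `i` to a chain realizing the depth of a predecessor `k` shows that the depth
strictly decreases along `≪`. -/
theorem depth_lt_of_ll (hdep : D.DepthSpec d' d) {i k : Fin D.n}
    (h : Segment.ll (D.iseg k) (D.iseg i)) : d (Sum.inl i) < d (Sum.inl k) := by
  obtain ⟨m, c, h0, hc, hz⟩ := (hdep.2.1 k).1
  have key : d (Sum.inl i) ≤ (d' (c m) : ℤ) - ((m + 1 : ℕ) : ℤ) := by
    refine (hdep.2.1 i).2 ⟨m + 1, fun r => Nat.casesOn r i c, rfl, ?_, rfl⟩
    intro r hr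
    cases r with
    | zero => simpa [h0] using h
    | succ r => exact hc r (by omega)
  push_cast at key
  omega

/-- A chain realizing the depth of `i` is either trivial, or its first step leads to a predecessor
whose depth exceeds that of `i` by at most one. -/
theorem depth_step (hdep : D.DepthSpec d' d) (i : Fin D.n) :
    d (Sum.inl i) = d' i ∨
      ∃ k, Segment.ll (D.iseg k) (D.iseg i) ∧ d (Sum.inl k) ≤ d (Sum.inl i) + 1 := by
  obtain ⟨m, c, h0, hc, hz⟩ := (hdep.2.1 i).1
  cases m with
  | zero => left; simpa [h0] using hz
  | succ m =>
    right
    refine ⟨c 1, by simpa [h0] using hc 0 (by omega), ?_⟩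
    have key : d (Sum.inl (c 1)) ≤ (d' (c (m + 1)) : ℤ) - (m : ℤ) :=
      (hdep.2.1 (c 1)).2 ⟨m, fun r => c (r + 1), rfl, fun r hr => hc (r + 1) (by omega), rfl⟩
    push_cast at hz
    omega

theorem depth_anti (hdep : D.DepthSpec d' d) {i k : Fin D.n}
    (hb : (D.iseg i).b ≤ (D.iseg k).b) (he : (D.iseg i).e ≤ (D.iseg k).e) :
    d (Sum.inl k) ≤ d (Sum.inl i) := by
  rcases depth_step hdep i with h | ⟨z, hz, hd⟩
  · obtain ⟨s, hs, hsb, hse⟩ := dPrime_spec hdep k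
    have h1 : (s : ℕ) ≤ d' i := le_dPrime hdep (hb.trans hsb) (he.trans hse)
    have h2 := depth_le_dPrime hdep k
    omega
  · have := depth_lt_of_ll hdep (i := k) (k := z) ⟨hz.1.trans_le hb, hz.2.trans_le he⟩
    omega

/-- The descent: if the ladder has a segment at position at least `𝔡(x)` dominating the region
`b ≤ b(Δ_x)`, `e(Δ_x) ≤ e ≤ E`, and no index in that region with `b < b(Δ_x)` and `e < E` has
depth exactly `𝔡(x)`, then no index in the region has depth smaller than `𝔡(x)`. -/
theorem le_depth_of_between (hdep : D.DepthSpec d' d) (x : Fin D.n) (E : ℤ) (s : Fin D.l)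
    (hs : d (Sum.inl x) ≤ (s : ℕ)) (hsb : (D.iseg x).b ≤ (D.jseg s).b) (hse : E ≤ (D.jseg s).e)
    (H : ∀ z : Fin D.n, (D.iseg z).b < (D.iseg x).b → (D.iseg x).e ≤ (D.iseg z).e →
      (D.iseg z).e < E → d (Sum.inl z) ≠ d (Sum.inl x)) (z : Fin D.n)
    (hzb : (D.iseg z).b ≤ (D.iseg x).b) (hxe : (D.iseg x).e ≤ (D.iseg z).e)
    (hze : (D.iseg z).e ≤ E) : d (Sum.inl x) ≤ d (Sum.inl z) := by
  induction z using WellFoundedLT.induction with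
  | ind z ih =>
  by_contra hlt
  rcases depth_step hdep z with h | ⟨w, hw, hd⟩
  · have := le_dPrime hdep (hzb.trans hsb) (hze.trans hse)
    omega
  · have hwb := hw.1.trans_le hzb
    have hwE := hw.2.trans_le hze
    have hxw : (D.iseg x).e ≤ (D.iseg w).e := by
      by_contra hcon
      have := depth_lt_of_ll hdep (i := x) (k := w) ⟨hwb, not_le.mp hcon⟩
      omega
    have h1 := ih w (lt_of_b_lt hw.1) hwb.le hxw hwE.le
    have h2 := H w hwb hxw hwE
    omega

end KVData

open KVData

/-- Lemma `lem:import`(3).  Let `(𝔩,𝔪)` be a permissible pair with the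
algorithm notations in place.  Let `x ∈ I ∪ J` and `i' ∈ I` be indices such that
`b(Δ_x) = b(Δ_{i'})` and `e(Δ_x) < e(Δ_{i'}) ≤ e(Δ_{x_#})`.  Then `𝔡(i') = 𝔡(x)` and
`Δ_{x_#} = Δ_{i'}`. -/
theorem import_lemma_part3 (D : KVData) (d' : Fin D.n → ℕ)
    (d : Fin D.n ⊕ Fin D.l → ℤ) (σ : Equiv.Perm (Fin D.n ⊕ Fin D.l))
    (hdep : D.DepthSpec d' d) (hσ : D.SigmaSpec d σ)
    (x : Fin D.n ⊕ Fin D.l) (i' : Fin D.n)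
    (hb : (D.segOf x).b = (D.iseg i').b)
    (he1 : (D.segOf x).e < (D.iseg i').e)
    (he2 : (D.iseg i').e ≤ (D.segOf (σ x)).e) :
    d (Sum.inl i') = d x ∧ D.segOf (σ x) = D.iseg i' := by
  rcases x with x | t
  · simp only [segOf, Sum.elim_inl] at hb he1
    have hle : d (Sum.inl i') ≤ d (Sum.inl x) := depth_anti hdep hb.le he1.le
    have hi'x : i' < x := lt_of_b_eq_of_e_lt hb.symm he1
    obtain ⟨s, hs, hsb, hse⟩ := dPrime_spec hdep x
    have hxd := depth_le_dPrime hdep x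
    rcases hσ.1 x with ⟨y, ⟨⟨hyx, hyd⟩, hmax⟩, hy⟩ | ⟨hno, t, ht, hy⟩
    · rw [hy] at he2 ⊢
      simp only [segOf, Sum.elim_inl] at he2 ⊢
      obtain ⟨u, hu, hub, hue⟩ := dPrime_spec hdep y
      have hyd' := depth_le_dPrime hdep y
      -- The smaller of the positions `𝔡'(x)`, `𝔡'(y)` dominates both `b(Δ_x)` and `e(Δ_y)`.
      have hms := jseg_anti (min_le_left s u)
      have hmu := jseg_anti (min_le_right s u)
      have hmin : d (Sum.inl x) ≤ ((min s u : Fin D.l) : ℕ) := by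
        rcases min_choice s u with h | h <;> rw [h] <;> omega
      have hge := le_depth_of_between hdep x (D.iseg y).e (min s u) hmin
        (hsb.trans hms.1) (hue.trans hmu.2) (fun z hzb _ hze hzd => by
          have hzy : z ≤ y := hmax ⟨lt_of_b_lt hzb, hzd⟩
          rcases hzy.eq_or_lt with rfl | hzy
          · exact lt_irrefl _ hze
          · rcases D.iOrder y z hzy with h | h
            · have := depth_lt_of_ll hdep (i := y) (k := z) ⟨h, hze⟩
              omega
            · omega) i' hb.ge he1.le he2
      have hd : d (Sum.inl i') = d (Sum.inl x) := le_antisymm hle hge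
      refine ⟨hd, ?_⟩
      have hi'y : i' ≤ y := hmax ⟨hi'x, hd⟩
      rcases hi'y.eq_or_lt with rfl | hi'y
      · rfl
      · have h1 := D.iOrder y i' hi'y
        have h2 := D.iOrder x y hyx
        have hbe : (D.iseg y).b = (D.iseg i').b ∧ (D.iseg y).e = (D.iseg i').e := by omega
        cases h3 : D.iseg y
        cases h4 : D.iseg i'
        simp_all
    · rw [hy] at he2
      simp only [segOf, Sum.elim_inr] at he2
      have hts : t ≤ s := by
        rw [Fin.le_def]; omega
      have hts' := jseg_anti hts
      have hge := le_depth_of_between hdep x (D.jseg t).e t ht.ge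
        (hsb.trans hts'.1) le_rfl (fun z hzb _ _ hzd => hno ⟨z, lt_of_b_lt hzb, hzd⟩)
        i' hb.ge he1.le he2
      exact absurd ⟨i', hi'x, le_antisymm hle hge⟩ hno
  · exfalso
    rcases hσ.2 t with ⟨y, ⟨hyd, _⟩, hy⟩ | ⟨_, hy⟩
    · rw [hy] at he2
      simp only [segOf, Sum.elim_inl, Sum.elim_inr] at he1 he2
      obtain ⟨u, hu, _, hue⟩ := dPrime_spec hdep y
      have hyd' := depth_le_dPrime hdep y
      have hyd : d (Sum.inl y) = (t : ℤ) := hyd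
      have htu : t ≤ u := by
        rw [Fin.le_def]; omega
      have := (jseg_anti htu).2
      omega
    · rw [hy] at he2
      omega
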